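/- Let r be an integer with 1 ≤ r ≤ 8, and let D be a minimal Enriques diagram with cod(D) ≥ r+1. Then D contains a minimal Enriques subdiagram D′ such that cod(D′) ≥ r and deg(D′) ≤ 3r. -/

import Mathlib

open Classical Finset

/-- The raw data of a finite weighted forest equipped with a proximity relation.
The vertices are the elements of `Fin n`; `parent v` is the immediate predecessor of `v`
(`none` iff `v` is a root); `wt v` is the weight of `v`; and `prox a b` means
that `a` is proximate to `b`. -/
structure PreDiagram where
  n : ℕ
  parent : Fin n → Option (Fin n)
  wt : Fin n → ℕ
  prox : Fin n → Fin n → Prop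

namespace PreDiagram

variable (D : PreDiagram)

/-- `a` is the immediate predecessor of `b`. -/
def ImPred (a b : Fin D.n) : Prop := D.parent b = some a

/-- `a` is a predecessor of `b` (reflexive-transitive closure of `ImPred`). -/
def Pred (a b : Fin D.n) : Prop := Relation.ReflTransGen D.ImPred a b

/-- `a` is a proper predecessor of `b`. -/
def ProperPred (a b : Fin D.n) : Prop := Relation.TransGen D.ImPred a b

/-- `a` is a remote predecessor of `b`: a proper but not immediate predecessor. -/
def RemotePred (a b : Fin D.n) : Prop := D.ProperPred a b ∧ ¬ D.ImPred a b

def IsRoot (v : Fin D.n) : Prop := D.parent v = none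

/-- A leaf is a vertex with no proper successor. -/
def IsLeaf (v : Fin D.n) : Prop := ∀ w, ¬ D.ImPred v w

/-- `a` is remotely proximate to `b`: proximate to `b`, and `b` is a remote predecessor. -/
def RemoteProx (a b : Fin D.n) : Prop := D.prox a b ∧ D.RemotePred b a

/-- A satellite is a vertex proximate to a remote predecessor. -/
def IsSatellite (v : Fin D.n) : Prop := ∃ t, D.RemoteProx v t

/-- A free vertex is one that is not a satellite. -/
def IsFree (v : Fin D.n) : Prop := ¬ D.IsSatellite v

/-- The laws of a minimal Enriques diagram. -/
structure IsMED : Prop where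
  /-- The graph is a forest: no vertex is a proper predecessor of itself. -/
  forest : ∀ v, ¬ D.ProperPred v v
  /-- Every weight is at least `1`. -/
  wt_pos : ∀ v, 1 ≤ D.wt v
  /-- Law of Proximity: a root is proximate to no vertex. -/
  root_not_prox : ∀ v, D.IsRoot v → ∀ w, ¬ D.prox v w
  /-- Law of Proximity: a non-root is proximate to its immediate predecessor. -/
  prox_parent : ∀ v u, D.parent v = some u → D.prox v u
  /-- Law of Proximity: any other vertex a non-root is proximate to is a remote predecessor. -/
  prox_remote : ∀ v u w, D.parent v = some u → D.prox v w → w ≠ u → D.RemotePred w v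
  /-- Law of Proximity: a non-root is proximate to at most one vertex other than its
  immediate predecessor. -/
  prox_unique : ∀ v u w w', D.parent v = some u → D.prox v w → D.prox v w' →
      w ≠ u → w' ≠ u → w = w'
  /-- Law of Proximity: if `a` is proximate to `b` and `c` lies properly between them,
  then `c` is proximate to `b`. -/
  prox_between : ∀ a b c, D.prox a b → D.ProperPred b c → D.ProperPred c a → D.prox c b
  /-- Proximity Inequality. -/
  prox_ineq : ∀ v, ∑ w ∈ univ.filter (fun w => D.prox w v), D.wt w ≤ D.wt v
  /-- Law of Succession: a vertex `v` has at most `wt v` immediate successors. -/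
  succ_card : ∀ v, (univ.filter (fun w => D.ImPred v w)).card ≤ D.wt v
  /-- Law of Succession: at most two immediate successors are satellites. -/
  succ_sat : ∀ v w₁ w₂ w₃, D.ImPred v w₁ → D.ImPred v w₂ → D.ImPred v w₃ →
      D.IsSatellite w₁ → D.IsSatellite w₂ → D.IsSatellite w₃ →
      w₁ ≠ w₂ → w₁ ≠ w₃ → w₂ ≠ w₃ → False
  /-- Law of Succession: two distinct immediate successors of the same vertex cannot be
  satellites of the same vertex. -/
  succ_sat_diff : ∀ v w₁ w₂ t, D.ImPred v w₁ → D.ImPred v w₂ → w₁ ≠ w₂ →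
      D.RemoteProx w₁ t → D.RemoteProx w₂ t → False
  /-- Law of Minimality: every leaf of weight `1` is a satellite. -/
  minimal : ∀ v, D.IsLeaf v → D.wt v = 1 → D.IsSatellite v

/-- The number of roots. -/
noncomputable def rts : ℕ := (univ.filter (fun v => D.IsRoot v)).card

/-- The number of free vertices. -/
noncomputable def frs : ℕ := (univ.filter (fun v => D.IsFree v)).card

/-- `dim D = rts D + frs D`. -/
noncomputable def dimD : ℕ := D.rts + D.frs

/-- `deg D = Σ_V C(m_V + 1, 2)`. -/
def degD : ℕ := ∑ v, (D.wt v + 1).choose 2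

/-- `cod D = deg D - dim D`. -/
noncomputable def cod : ℤ := (D.degD : ℤ) - (D.dimD : ℤ)

/-- `δ(D) = Σ_V C(m_V, 2)`. -/
def deltaD : ℕ := ∑ v, (D.wt v).choose 2

/-- `r(D) = Σ_V (m_V - Σ_{W ≻ V} m_W)`. -/
noncomputable def rCh : ℤ :=
  ∑ v, ((D.wt v : ℤ) - ∑ w ∈ univ.filter (fun w => D.prox w v), (D.wt w : ℤ))

/-- `μ(D) = 2 δ(D) - r(D) + rts D`. -/
noncomputable def mu : ℤ := 2 * (D.deltaD : ℤ) - D.rCh + (D.rts : ℤ)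

/-- An isomorphism of diagrams: a weight-preserving bijection of the vertices preserving
the immediate-predecessor and proximity relations. -/
structure Iso (D₁ D₂ : PreDiagram) where
  toEquiv : Fin D₁.n ≃ Fin D₂.n
  wt_eq : ∀ v, D₂.wt (toEquiv v) = D₁.wt v
  imPred_iff : ∀ a b, D₂.ImPred (toEquiv a) (toEquiv b) ↔ D₁.ImPred a b
  prox_iff : ∀ a b, D₂.prox (toEquiv a) (toEquiv b) ↔ D₁.prox a b

def Isomorphic (D₁ D₂ : PreDiagram) : Prop := Nonempty (Iso D₁ D₂)

/-- A realization of `D'` as a subdiagram of `D`: an injection of the vertices such that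
the weight of a vertex of `D'` is at most its weight in `D`, and the succession
(predecessor) and proximity relations of `D'` are the ones induced from `D`. -/
structure Subdiagram (D' D : PreDiagram) where
  toFun : Fin D'.n → Fin D.n
  inj : Function.Injective toFun
  wt_le : ∀ v, D'.wt v ≤ D.wt (toFun v)
  pred_iff : ∀ a b, D'.Pred a b ↔ D.Pred (toFun a) (toFun b)
  prox_iff : ∀ a b, D'.prox a b ↔ D.prox (toFun a) (toFun b)

def IsSubdiagram (D' D : PreDiagram) : Prop := Nonempty (Subdiagram D' D)

/-- The parent function of a chain `0 → 1 → ⋯ → n-1`. -/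
def chainParent (n : ℕ) (v : Fin n) : Option (Fin n) :=
  if v.val = 0 then none
  else some ⟨v.val - 1, lt_of_le_of_lt (Nat.sub_le _ _) v.isLt⟩

/-- The diagram `A_k` (`k ≥ 1`): for `k = 2i-1`, a chain of `i` free vertices of weight `2`;
for `k = 2i`, such a chain followed by a chain of two vertices of weight `1`, both
proximate to the `i`-th weight-`2` vertex. -/
def diagA (k : ℕ) : PreDiagram where
  n := if k % 2 = 0 then k / 2 + 2 else (k + 1) / 2
  parent := chainParent _
  wt := fun v => if v.val < (k + 1) / 2 then 2 else 1
  prox := fun a b => a.val = b.val + 1 ∨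
    (k % 2 = 0 ∧ a.val = k / 2 + 1 ∧ b.val + 1 = k / 2)

/-- The diagram `D_k` (`k ≥ 4`): a root of weight `3`, followed by nothing if `k = 4`,
by two vertices of weight `1` both proximate to the root if `k = 5`, and by the diagram
`A_{k-5}` if `k ≥ 6`. -/
def diagD (k : ℕ) : PreDiagram where
  n := (k - 4) / 2 + (if k % 2 = 0 then 1 else 3)
  parent := chainParent _
  wt := fun v => if v.val = 0 then 3 else if v.val ≤ (k - 4) / 2 then 2 else 1
  prox := fun a b => a.val = b.val + 1 ∨
    (k % 2 = 1 ∧ a.val = (k - 4) / 2 + 2 ∧ b.val = (k - 4) / 2)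

/-- The diagram `E_{6l+j}` (`l ≥ 1`, `j ∈ {0,1,2}`), with argument `m = 6l + j`. -/
def diagE (m : ℕ) : PreDiagram where
  n := m / 6 + (if m % 6 = 1 then 2 else 3)
  parent := chainParent _
  wt := fun v => if v.val < m / 6 then 3 else
    if 1 ≤ m % 6 ∧ v.val = m / 6 then 2 else 1
  prox := fun a b => a.val = b.val + 1 ∨
    (m % 6 = 0 ∧ (a.val = m / 6 + 1 ∨ a.val = m / 6 + 2) ∧ b.val + 1 = m / 6) ∨
    (m % 6 = 1 ∧ a.val = m / 6 + 1 ∧ b.val + 1 = m / 6) ∨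
    (m % 6 = 2 ∧ ((a.val = m / 6 + 1 ∧ b.val + 1 = m / 6) ∨
                  (a.val = m / 6 + 2 ∧ b.val = m / 6)))

/-- The diagram `J_{l,k}` (`l ≥ 2`, `k ≥ 0`): a chain of `l - 1` free vertices of weight `3`
followed by the diagram `D_{k+4}`. -/
def diagJ (l k : ℕ) : PreDiagram where
  n := (l - 1) + k / 2 + (if k % 2 = 0 then 1 else 3)
  parent := chainParent _
  wt := fun v => if v.val ≤ l - 1 then 3 else if v.val ≤ l - 1 + k / 2 then 2 else 1
  prox := fun a b => a.val = b.val + 1 ∨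
    (k % 2 = 1 ∧ a.val = (l - 1) + k / 2 + 2 ∧ b.val = (l - 1) + k / 2)

/-- The diagram `X_{1,0}`: a single root of weight `4`. -/
def diagX10 : PreDiagram where
  n := 1
  parent := chainParent _
  wt := fun _ => 4
  prox := fun a b => a.val = b.val + 1

/-- The diagram `X_{1,1}`: a root of weight `4` followed by a chain of two vertices of
weight `1`, both proximate to the root. -/
def diagX11 : PreDiagram where
  n := 3
  parent := chainParent _
  wt := fun v => if v.val = 0 then 4 else 1
  prox := fun a b => a.val = b.val + 1 ∨ (a.val = 2 ∧ b.val = 0)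

/-- The diagram `X_{1,2}`: a root of weight `4` followed by one free vertex of weight `2`. -/
def diagX12 : PreDiagram where
  n := 2
  parent := chainParent _
  wt := fun v => if v.val = 0 then 4 else 2
  prox := fun a b => a.val = b.val + 1

/-- The diagram `Z_{11}`: a root of weight `4` followed by a chain of three vertices of
weight `1`, all proximate to the root. -/
def diagZ11 : PreDiagram where
  n := 4
  parent := chainParent _
  wt := fun v => if v.val = 0 then 4 else 1
  prox := fun a b => a.val = b.val + 1 ∨ ((a.val = 2 ∨ a.val = 3) ∧ b.val = 0)

/-- The diagram `Y_{1,1}`: a root of weight `4` with two immediate free successors of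
weight `1`, each of which has one immediate successor of weight `1` that is remotely
proximate to the root. -/
def diagY11 : PreDiagram where
  n := 5
  parent := fun v =>
    if v.val = 0 then none
    else if v.val ≤ 2 then some ⟨0, by omega⟩
    else if v.val = 3 then some ⟨1, by omega⟩
    else some ⟨2, by omega⟩
  wt := fun v => if v.val = 0 then 4 else 1
  prox := fun a b => (a.val = 1 ∧ b.val = 0) ∨ (a.val = 2 ∧ b.val = 0) ∨
    (a.val = 3 ∧ (b.val = 1 ∨ b.val = 0)) ∨ (a.val = 4 ∧ (b.val = 2 ∨ b.val = 0))

/-- The disjoint union of two diagrams. -/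
def disjUnion (D₁ D₂ : PreDiagram) : PreDiagram where
  n := D₁.n + D₂.n
  parent := fun v =>
    if h : v.val < D₁.n then
      (D₁.parent ⟨v.val, h⟩).map
        (fun w => ⟨w.val, Nat.lt_of_lt_of_le w.isLt (Nat.le_add_right _ _)⟩)
    else
      (D₂.parent ⟨v.val - D₁.n, by have := v.isLt; omega⟩).map
        (fun w => ⟨D₁.n + w.val, by have := w.isLt; omega⟩)
  wt := fun v =>
    if h : v.val < D₁.n then D₁.wt ⟨v.val, h⟩
    else D₂.wt ⟨v.val - D₁.n, by have := v.isLt; omega⟩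
  prox := fun a b =>
    (∃ (ha : a.val < D₁.n) (hb : b.val < D₁.n), D₁.prox ⟨a.val, ha⟩ ⟨b.val, hb⟩) ∨
    (∃ (_ : D₁.n ≤ a.val) (_ : D₁.n ≤ b.val),
      D₂.prox ⟨a.val - D₁.n, by have := a.isLt; omega⟩
              ⟨b.val - D₁.n, by have := b.isLt; omega⟩)

end PreDiagram

/-!
A subdiagram of `D` is encoded by a weight function `w ≤ D.wt`, with weight `0` on omitted vertices.
The key fact is that a nonzero subdiagram `w` has a strictly smaller subdiagram `w'` with
`deg w ≤ 3 (cod w' + 1)`. Hence a minimal `w` with `cod w ≥ r` satisfies `deg w ≤ 3 r`, because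
`cod w' ≤ r - 1`.

To find `w'`, split `3 cod w - deg w` into contributions of the vertices. Only free vertices of
weight `1` contribute negatively, namely `-1`, and each of them is followed by a satellite of weight
`1`, which contributes `2`. So the contribution of any single vertex of weight `≥ 2` is a lower
bound for `3 cod w - deg w`, and at a leaf this pays for the codimension lost by shrinking there.
-/

namespace PreDiagram

/-- The degree of the diagram with weights `w`; a vertex of weight `0` counts as absent. -/
def weightDeg {n : ℕ} (w : Fin n → ℕ) : ℕ := ∑ v, (w v + 1).choose 2

variable (D : PreDiagram)

/-- A subdiagram of `D` encoded by its weights, extended by `0` to the vertices it omits. The Law of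
Succession is inherited from `D` and the Proximity Inequality, so it is not a field. -/
structure IsSubweighting (w : Fin D.n → ℕ) : Prop where
  le : ∀ v, w v ≤ D.wt v
  prox_ineq : ∀ v, ∑ x with D.prox x v, w x ≤ w v
  minimal : ∀ v, (∀ x, D.ImPred v x → w x = 0) → w v = 1 → D.IsSatellite v

/-- The contribution of the vertex `v`, given the weight `m`, to the codimension. -/
noncomputable def codAt (v : Fin D.n) (m : ℕ) : ℤ :=
  if m = 0 then 0
  else ((m + 1).choose 2 : ℤ) - (if D.IsFree v then 1 else 0) - (if D.IsRoot v then 1 else 0)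

/-- The codimension of the diagram with weights `w`. -/
noncomputable def weightCod (w : Fin D.n → ℕ) : ℤ := ∑ v, D.codAt v (w v)

/-- The contribution of the vertex `v`, given the weight `m`, to `3 cod - deg`. -/
noncomputable def excess (v : Fin D.n) (m : ℕ) : ℤ := 3 * D.codAt v m - ((m + 1).choose 2 : ℤ)

/-- Removes the vertex `l` from the diagram with weights `w`, together with its immediate
predecessor if that is a free vertex of weight `1`: left behind as a leaf, it would violate the Law
of Minimality. -/
noncomputable def trim (w : Fin D.n → ℕ) (l : Fin D.n) : Fin D.n → ℕ := fun v =>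
  if v = l ∨ (D.ImPred v l ∧ D.IsFree v ∧ w v = 1) then 0 else w v

variable {D} {w w' : Fin D.n → ℕ}

lemma ImPred.eq {p q v : Fin D.n} (hp : D.ImPred p v) (hq : D.ImPred q v) : p = q :=
  Option.some.inj (hp.symm.trans hq)

lemma IsRoot.not_imPred {v : Fin D.n} (hv : D.IsRoot v) (p : Fin D.n) : ¬ D.ImPred p v :=
  fun hp => Option.some_ne_none p (hp.symm.trans hv)

lemma exists_imPred_of_not_isRoot {v : Fin D.n} (hv : ¬ D.IsRoot v) : ∃ p, D.ImPred p v :=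
  Option.ne_none_iff_exists'.mp hv

namespace IsMED

lemma isFree_of_isRoot (hD : D.IsMED) {v : Fin D.n} (hv : D.IsRoot v) : D.IsFree v :=
  fun ⟨t, ht, _⟩ => hD.root_not_prox v hv t ht

lemma properPred_of_prox (hD : D.IsMED) {x v : Fin D.n} (h : D.prox x v) : D.ProperPred v x := by
  by_cases hx : D.IsRoot x
  · exact absurd h (hD.root_not_prox x hx v)
  obtain ⟨u, hu⟩ := exists_imPred_of_not_isRoot hx
  by_cases hvu : v = u
  · exact hvu ▸ .single hu
  · exact (hD.prox_remote x u v hu h hvu).1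

lemma wellFounded_prox (hD : D.IsMED) : WellFounded D.prox := by
  have : IsTrans (Fin D.n) (fun x v => D.ProperPred v x) := ⟨fun _ _ _ h h' => h'.trans h⟩
  have : Std.Irrefl (fun x v : Fin D.n => D.ProperPred v x) := ⟨hD.forest⟩
  exact Subrelation.wf (fun h => hD.properPred_of_prox h)
    (Finite.wellFounded_of_trans_of_irrefl fun x v : Fin D.n => D.ProperPred v x)

lemma prox_of_remoteProx (hD : D.IsMED) {x y t : Fin D.n} (hxy : D.ImPred x y)
    (ht : D.RemoteProx y t) : D.prox x t := by
  obtain ⟨hyt, hty, hremote⟩ := ht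
  obtain ⟨z, htz, hzy⟩ := Relation.TransGen.tail'_iff.1 hty
  obtain rfl := hxy.eq hzy
  rcases Relation.reflTransGen_iff_eq_or_transGen.1 htz with rfl | htx
  · exact absurd hxy hremote
  · exact hD.prox_between y t x hyt htx (.single hxy)

lemma isSubweighting_wt (hD : D.IsMED) : D.IsSubweighting D.wt where
  le _ := le_rfl
  prox_ineq := hD.prox_ineq
  minimal v hv := hD.minimal v fun x hx => by
    have := hv x hx
    have := hD.wt_pos x
    omega

lemma exists_leaf_of_ne_zero (hD : D.IsMED) (hw : w ≠ 0) :
    ∃ l, w l ≠ 0 ∧ ∀ x, D.prox x l → w x = 0 := by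
  obtain ⟨l, hl, hmin⟩ := hD.wellFounded_prox.has_min {v | w v ≠ 0} (Function.ne_iff.1 hw)
  exact ⟨l, hl, fun x hx => not_not.1 fun hwx => hmin x hwx hx⟩

end IsMED

namespace IsSubweighting

lemma le_of_prox (hw : D.IsSubweighting w) {x v : Fin D.n} (h : D.prox x v) : w x ≤ w v :=
  (single_le_sum (f := w) (fun _ _ => Nat.zero_le _) (by simpa using h)).trans (hw.prox_ineq v)

lemma add_le_of_prox (hw : D.IsSubweighting w) {x y v : Fin D.n} (hx : D.prox x v)
    (hy : D.prox y v) (hxy : x ≠ y) : w x + w y ≤ w v := by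
  rw [← sum_pair hxy]
  exact (sum_le_sum_of_subset (by simp [insert_subset_iff, hx, hy])).trans (hw.prox_ineq v)

lemma le_of_imPred (hw : D.IsSubweighting w) (hD : D.IsMED) {u v : Fin D.n}
    (h : D.ImPred u v) : w v ≤ w u :=
  hw.le_of_prox (hD.prox_parent v u h)

lemma of_le (hw : D.IsSubweighting w) (hle : w' ≤ w)
    (hprox : ∀ x v, D.prox x v → w' x ≠ 0 → w' v = w v)
    (hmin : ∀ v, w' v = 1 → D.IsFree v → ∃ x, D.ImPred v x ∧ w' x ≠ 0) :
    D.IsSubweighting w' where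
  le v := (hle v).trans (hw.le v)
  prox_ineq v := by
    by_cases hv : w' v = w v
    · exact hv ▸ (sum_le_sum fun x _ => hle x).trans (hw.prox_ineq v)
    · rw [sum_eq_zero fun x hx => not_not.1 fun hx0 => hv (hprox x v (by simpa using hx) hx0)]
      exact Nat.zero_le _
  minimal v hv hv1 := by
    by_contra hfree
    obtain ⟨x, hvx, hx⟩ := hmin v hv1 hfree
    exact hx (hv x hvx)

/-! ### Vertices of weight one -/

lemma exists_succ_of_isFree_of_eq_one (hw : D.IsSubweighting w) (hD : D.IsMED) {x : Fin D.n}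
    (hfree : D.IsFree x) (hx : w x = 1) : ∃ y, D.ImPred x y ∧ w y = 1 := by
  obtain ⟨y, hxy, hy⟩ : ∃ y, D.ImPred x y ∧ w y ≠ 0 := by
    by_contra! h
    exact hfree (hw.minimal x h hx)
  have := hw.le_of_imPred hD hxy
  exact ⟨y, hxy, by omega⟩

/-- Climbing along free vertices of weight `1` must end at a satellite `y` of some `t`. The vertex
below `y` is then proximate to `t` as well, which forces `w t ≥ 2`. -/
lemma exists_pred_two_le_of_isFree_of_eq_one (hw : D.IsSubweighting w) (hD : D.IsMED) {x : Fin D.n}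
    (hfree : D.IsFree x) (hx : w x = 1) : ∃ p, D.ImPred p x ∧ 2 ≤ w p := by
  induction x using hD.wellFounded_prox.induction with
  | _ x ih =>
    obtain ⟨y, hxy, hy⟩ := hw.exists_succ_of_isFree_of_eq_one hD hfree hx
    have hyx : D.prox y x := hD.prox_parent y x hxy
    by_cases hysat : D.IsSatellite y
    · obtain ⟨t, ht⟩ := hysat
      have hxt : D.prox x t := hD.prox_of_remoteProx hxy ht
      have hne : x ≠ y := by
        rintro rfl
        exact hD.forest x (.single hxy)
      have := hw.add_le_of_prox hxt ht.1 hne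
      refine ⟨t, ?_, by omega⟩
      by_contra htx
      exact hfree ⟨t, hxt, hD.properPred_of_prox hxt, htx⟩
    · obtain ⟨p, hpy, hp⟩ := ih y hyx hysat hy
      obtain rfl := hpy.eq hxy
      omega

lemma not_isRoot_of_isFree_of_eq_one (hw : D.IsSubweighting w) (hD : D.IsMED) {x : Fin D.n}
    (hfree : D.IsFree x) (hx : w x = 1) : ¬ D.IsRoot x := fun hroot =>
  have ⟨p, hp, _⟩ := hw.exists_pred_two_le_of_isFree_of_eq_one hD hfree hx
  hroot.not_imPred p hp

lemma exists_satellite_succ_of_isFree_of_eq_one (hw : D.IsSubweighting w) (hD : D.IsMED)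
    {x : Fin D.n} (hfree : D.IsFree x) (hx : w x = 1) :
    ∃ y, D.ImPred x y ∧ D.IsSatellite y ∧ w y = 1 := by
  obtain ⟨y, hxy, hy⟩ := hw.exists_succ_of_isFree_of_eq_one hD hfree hx
  refine ⟨y, hxy, ?_, hy⟩
  by_contra hyfree
  obtain ⟨p, hpy, hp⟩ := hw.exists_pred_two_le_of_isFree_of_eq_one hD hyfree hy
  obtain rfl := hpy.eq hxy
  omega

lemma card_isFree_eq_one_le (hw : D.IsSubweighting w) (hD : D.IsMED) :
    #{v | w v = 1 ∧ D.IsFree v} ≤ #{v | w v = 1 ∧ D.IsSatellite v} := by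
  choose! f hf using fun x (h : w x = 1 ∧ D.IsFree x) =>
    hw.exists_satellite_succ_of_isFree_of_eq_one hD h.2 h.1
  refine card_le_card_of_injOn f (fun x hx => ?_) (fun x hx y hy hxy => ?_)
  · have := hf x (by simpa using hx)
    simpa using this.2.symm
  · have hx' := (hf x (by simpa using hx)).1
    exact hx'.eq (hxy ▸ (hf y (by simpa using hy)).1)

end IsSubweighting

/-! ### Codimension and degree -/

lemma two_mul_choose_two (m : ℕ) : 2 * ((m + 1).choose 2 : ℤ) = m * (m + 1) := by
  have h := Nat.add_one_mul_choose_eq m 1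
  rw [Nat.choose_one_right] at h
  zify at h
  linarith

@[simp]
lemma codAt_zero (v : Fin D.n) : D.codAt v 0 = 0 := if_pos rfl

lemma codAt_one_of_isFree {v : Fin D.n} (hfree : D.IsFree v) (hroot : ¬ D.IsRoot v) :
    D.codAt v 1 = 0 := by
  simp [codAt, hfree, hroot]

lemma IsMED.codAt_one_of_isSatellite (hD : D.IsMED) {v : Fin D.n} (hv : D.IsSatellite v) :
    D.codAt v 1 = 1 := by
  have hfree : ¬ D.IsFree v := not_not.2 hv
  simp [codAt, hfree, mt hD.isFree_of_isRoot hfree]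

lemma codAt_succ (v : Fin D.n) {m : ℕ} (hm : m ≠ 0) :
    D.codAt v (m + 1) = D.codAt v m + (m + 1) := by
  rw [codAt, codAt, if_neg m.succ_ne_zero, if_neg hm, Nat.choose_succ_succ' (m + 1) 1,
    Nat.choose_one_right]
  push_cast
  ring

lemma excess_eq (v : Fin D.n) {m : ℕ} (hm : m ≠ 0) :
    D.excess v m = m * (m + 1) - 3 * (if D.IsFree v then 1 else 0)
      - 3 * (if D.IsRoot v then 1 else 0) := by
  rw [excess, codAt, if_neg hm, ← two_mul_choose_two]
  ring

lemma excess_nonneg (v : Fin D.n) {m : ℕ} (hm : m ≠ 1) : 0 ≤ D.excess v m := by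
  obtain rfl | hm2 : m = 0 ∨ 2 ≤ m := by omega
  · simp [excess]
  · rw [excess_eq v (by omega)]
    zify at hm2
    split_ifs <;> nlinarith

lemma three_mul_le_excess_succ (v : Fin D.n) {m : ℕ} (hm : 2 ≤ m) :
    3 * (m : ℤ) ≤ D.excess v (m + 1) := by
  rw [excess_eq v m.succ_ne_zero]
  zify at hm
  push_cast
  split_ifs <;> nlinarith

lemma sum_excess (w : Fin D.n → ℕ) :
    ∑ v, D.excess v (w v) = 3 * D.weightCod w - weightDeg w := by
  simp only [excess, weightCod, weightDeg, sum_sub_distrib, mul_sum, Nat.cast_sum]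

lemma weightCod_update (w : Fin D.n → ℕ) (l : Fin D.n) (k : ℕ) :
    D.weightCod (Function.update w l k) = D.weightCod w - D.codAt l (w l) + D.codAt l k := by
  simp only [weightCod, Function.apply_update (fun v => D.codAt v) w l k]
  rw [sum_update_of_mem (mem_univ l), ← sum_sdiff (subset_univ {l}) (f := fun v => D.codAt v (w v)),
    sum_singleton]
  ring

lemma cod_eq_weightCod (hpos : ∀ v, 1 ≤ D.wt v) : D.cod = D.weightCod D.wt := by
  have hcodAt (v) : D.codAt v (D.wt v) = ((D.wt v + 1).choose 2 : ℤ)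
      - (if D.IsFree v then 1 else 0) - (if D.IsRoot v then 1 else 0) :=
    if_neg (Nat.one_le_iff_ne_zero.1 (hpos v))
  simp only [cod, degD, dimD, rts, frs, weightCod, hcodAt, sum_sub_distrib, sum_boole]
  push_cast
  ring

namespace IsSubweighting

/-- Each free vertex of weight `1` has excess `-1`, but is followed by a satellite of weight `1`,
whose excess is `2`. -/
lemma sum_excess_weight_one_nonneg (hw : D.IsSubweighting w) (hD : D.IsMED) :
    0 ≤ ∑ v with w v = 1, D.excess v (w v) := by
  have hfree : ∑ v with w v = 1 ∧ D.IsFree v, D.excess v (w v)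
      = ∑ v with w v = 1 ∧ D.IsFree v, -1 := sum_congr rfl fun v hv => by
    obtain ⟨hv1, hvfree⟩ : w v = 1 ∧ D.IsFree v := by simpa using hv
    simp [excess, hv1, codAt_one_of_isFree hvfree (hw.not_isRoot_of_isFree_of_eq_one hD hvfree hv1)]
  have hsat : ∑ v with w v = 1 ∧ ¬ D.IsFree v, D.excess v (w v)
      = ∑ v with w v = 1 ∧ ¬ D.IsFree v, 2 := sum_congr rfl fun v hv => by
    obtain ⟨hv1, hvsat⟩ : w v = 1 ∧ D.IsSatellite v := by simpa [IsFree] using hv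
    simp [excess, hv1, hD.codAt_one_of_isSatellite hvsat]
  have hcard := hw.card_isFree_eq_one_le hD
  rw [← sum_filter_add_sum_filter_not _ D.IsFree, filter_filter, filter_filter, hfree, hsat]
  simp only [sum_const, nsmul_eq_mul, IsFree, not_not] at hcard ⊢
  rw [← Nat.cast_le (α := ℤ)] at hcard
  linarith

lemma sum_excess_le_of_ne_one (hw : D.IsSubweighting w) (hD : D.IsMED) {s : Finset (Fin D.n)}
    (hs : ∀ v ∈ s, w v ≠ 1) : ∑ v ∈ s, D.excess v (w v) ≤ 3 * D.weightCod w - weightDeg w := by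
  rw [← sum_excess, ← sum_filter_add_sum_filter_not univ (w · = 1)]
  refine le_add_of_nonneg_of_le (hw.sum_excess_weight_one_nonneg hD) ?_
  refine sum_le_sum_of_subset_of_nonneg (fun v hv => by simpa using hs v hv) fun v hv _ => ?_
  exact excess_nonneg v (by simpa using hv)

lemma weightDeg_le (hw : D.IsSubweighting w) (hD : D.IsMED) :
    (weightDeg w : ℤ) ≤ 3 * D.weightCod w := by
  simpa using hw.sum_excess_le_of_ne_one hD (s := ∅) (by simp)

lemma weightDeg_add_excess_le (hw : D.IsSubweighting w) (hD : D.IsMED) {l : Fin D.n}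
    (hl : w l ≠ 1) : weightDeg w + D.excess l (w l) ≤ 3 * D.weightCod w := by
  have := hw.sum_excess_le_of_ne_one hD (s := {l}) (by simpa using hl)
  rw [sum_singleton] at this
  linarith

end IsSubweighting

/-! ### Shrinking at a leaf -/

lemma trim_lt {l : Fin D.n} (hl : w l ≠ 0) : D.trim w l < w := by
  refine Pi.lt_def.2 ⟨fun v => ?_, l, ?_⟩
  · unfold trim
    split_ifs <;> simp
  · simpa [trim] using Nat.pos_of_ne_zero hl

lemma trim_of_ne {l v : Fin D.n} (hvl : v ≠ l) (hv : ¬ (D.ImPred v l ∧ D.IsFree v ∧ w v = 1)) :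
    D.trim w l v = w v :=
  if_neg (by tauto)

namespace IsSubweighting

lemma isSubweighting_trim (hw : D.IsSubweighting w) (hD : D.IsMED) {l : Fin D.n} (hl0 : w l ≠ 0)
    (hl : ∀ x, D.prox x l → w x = 0) : D.IsSubweighting (D.trim w l) := by
  have hkeep {x} (hx : D.trim w l x ≠ 0) :
      x ≠ l ∧ ¬ (D.ImPred x l ∧ D.IsFree x ∧ w x = 1) ∧ w x ≠ 0 := by
    unfold trim at hx
    split_ifs at hx with h
    · exact absurd rfl hx
    · exact ⟨fun hxl => h (.inl hxl), fun hxp => h (.inr hxp), hx⟩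
  refine hw.of_le (trim_lt hl0).le (fun x v hxv hx => ?_) (fun v hv hfree => ?_)
  · obtain ⟨hxl, -, hx0⟩ := hkeep hx
    refine trim_of_ne (fun hvl => hx0 (hl x (hvl ▸ hxv))) fun ⟨hvl, _, hv1⟩ => ?_
    have : w x + w l ≤ 1 := hv1 ▸ hw.add_le_of_prox hxv (hD.prox_parent l v hvl) hxl
    omega
  · obtain ⟨hvl, hvp, -⟩ := hkeep (hv ▸ one_ne_zero)
    have hv1 : w v = 1 := trim_of_ne hvl hvp ▸ hv
    obtain ⟨y, hvy, hysat, hy⟩ := hw.exists_satellite_succ_of_isFree_of_eq_one hD hfree hv1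
    have hyl : y ≠ l := by
      rintro rfl
      exact hvp ⟨hvy, hfree, hv1⟩
    refine ⟨y, hvy, ?_⟩
    rw [trim_of_ne hyl fun h => h.2.1 hysat, hy]
    exact one_ne_zero

lemma weightCod_trim (hw : D.IsSubweighting w) (hD : D.IsMED) (l : Fin D.n) :
    D.weightCod (D.trim w l) + D.codAt l (w l) = D.weightCod w := by
  have hterm (v) : D.codAt v (D.trim w l v) + (if v = l then D.codAt v (w v) else 0)
      = D.codAt v (w v) := by
    by_cases hvl : v = l
    · simp [trim, hvl]
    by_cases hv : D.ImPred v l ∧ D.IsFree v ∧ w v = 1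
    · simp [trim, hvl, hv,
        codAt_one_of_isFree hv.2.1 (hw.not_isRoot_of_isFree_of_eq_one hD hv.2.1 hv.2.2)]
    · simp [trim_of_ne hvl hv, hvl]
  simpa [weightCod, sum_add_distrib] using sum_congr rfl fun v (_ : v ∈ univ) => hterm v

lemma isSubweighting_update (hw : D.IsSubweighting w) (hD : D.IsMED) {l : Fin D.n} {k : ℕ}
    (hl : ∀ x, D.prox x l → w x = 0) (hk : 2 ≤ k) (hkl : k ≤ w l) :
    D.IsSubweighting (Function.update w l k) := by
  have hle : Function.update w l k ≤ w := update_le_self_iff.2 hkl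
  refine hw.of_le hle (fun x v hxv hx => ?_) (fun v hv hfree => ?_)
  · refine Function.update_of_ne (fun hvl => hx ?_) _ _
    exact Nat.le_zero.1 (hl x (hvl ▸ hxv) ▸ hle x)
  · obtain rfl | hvl := eq_or_ne v l
    · rw [Function.update_self] at hv
      omega
    · rw [Function.update_of_ne hvl] at hv
      obtain ⟨y, hvy, hy⟩ := hw.exists_succ_of_isFree_of_eq_one hD hfree hv
      have hyl : y ≠ l := by
        rintro rfl
        omega
      exact ⟨y, hvy, by simp [Function.update_of_ne hyl, hy]⟩

/-- At a leaf of weight `m`, lower the weight by one if `m ≥ 3`, and trim if `m ≤ 2`. -/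
lemma exists_lt_weightDeg_le (hw : D.IsSubweighting w) (hD : D.IsMED) (hw0 : w ≠ 0) :
    ∃ w' < w, D.IsSubweighting w' ∧ (weightDeg w : ℤ) ≤ 3 * (D.weightCod w' + 1) := by
  obtain ⟨l, hl0, hl⟩ := hD.exists_leaf_of_ne_zero hw0
  have htrim := hw.weightCod_trim hD l
  obtain hl1 | hl2 | hl3 : w l = 1 ∨ w l = 2 ∨ 3 ≤ w l := by omega
  · have hsat : D.IsSatellite l := hw.minimal l (fun x hx => hl x (hD.prox_parent x l hx)) hl1
    have hdeg := hw.weightDeg_le hD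
    refine ⟨D.trim w l, trim_lt hl0, hw.isSubweighting_trim hD hl0 hl, ?_⟩
    rw [hl1, hD.codAt_one_of_isSatellite hsat] at htrim
    linarith
  · have hdeg := hw.weightDeg_add_excess_le hD (l := l) (by omega)
    refine ⟨D.trim w l, trim_lt hl0, hw.isSubweighting_trim hD hl0 hl, ?_⟩
    have hchoose : ((w l + 1).choose 2 : ℤ) = 3 := by simp [hl2, Nat.choose]
    rw [excess, hchoose] at hdeg
    linarith
  · obtain ⟨m, hm⟩ := Nat.exists_eq_add_one_of_ne_zero hl0
    have hdeg := hw.weightDeg_add_excess_le hD (l := l) (by omega)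
    have hexcess := three_mul_le_excess_succ l (show 2 ≤ m by omega)
    refine ⟨Function.update w l m, update_lt_self_iff.2 (by omega),
      hw.isSubweighting_update hD hl (by omega) (by omega), ?_⟩
    rw [weightCod_update, hm, codAt_succ l (by omega)]
    rw [hm] at hdeg
    linarith

end IsSubweighting

lemma IsMED.exists_isSubweighting_weightDeg_le (hD : D.IsMED) {r : ℕ} (hr : (r : ℤ) ≤ D.cod) :
    ∃ w, D.IsSubweighting w ∧ (r : ℤ) ≤ D.weightCod w ∧ weightDeg w ≤ 3 * r := by
  obtain ⟨w, hwmin⟩ := exists_minimal_of_wellFoundedLT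
    (fun w => D.IsSubweighting w ∧ (r : ℤ) ≤ D.weightCod w)
    ⟨D.wt, hD.isSubweighting_wt, cod_eq_weightCod hD.wt_pos ▸ hr⟩
  obtain ⟨hw, hcod⟩ := hwmin.prop
  refine ⟨w, hw, hcod, ?_⟩
  by_cases hw0 : w = 0
  · simp [weightDeg, hw0]
  obtain ⟨w', hlt, hw', hdeg⟩ := hw.exists_lt_weightDeg_le hD hw0
  have hcod' : D.weightCod w' < r := by
    by_contra! h
    exact hwmin.not_prop_of_lt hlt ⟨hw', h⟩
  omega

/-! ### The subdiagram on the support of a weighting -/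

section Restrict

variable (D) (w)

/-- The support of `w` is an initial subforest of `D`. -/
def HasClosedSupport : Prop := ∀ ⦃u v⦄, D.ImPred u v → w v ≠ 0 → w u ≠ 0

/-- The diagram induced by `D` on the support of `w`, weighted by `w`. Its vertices have to be
renumbered, and `parent` is only correct under `HasClosedSupport D w`. -/
noncomputable def restrict : PreDiagram where
  n := Fintype.card {v // w v ≠ 0}
  parent a := (D.parent ((Fintype.equivFin _).symm a : {v // w v ≠ 0})).bind fun u =>
    if hu : w u ≠ 0 then some (Fintype.equivFin {v // w v ≠ 0} ⟨u, hu⟩) else none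
  wt a := w ((Fintype.equivFin _).symm a : {v // w v ≠ 0})
  prox a b := D.prox ((Fintype.equivFin _).symm a : {v // w v ≠ 0})
    ((Fintype.equivFin _).symm b : {v // w v ≠ 0})

/-- The inclusion of the vertices of `D.restrict w` into those of `D`. -/
noncomputable def inclusion : Fin (D.restrict w).n ↪ Fin D.n :=
  (Fintype.equivFin {v // w v ≠ 0}).symm.toEmbedding.trans (.subtype _)

variable {D} {w}

lemma inclusion_ne_zero (a : Fin (D.restrict w).n) : w (D.inclusion w a) ≠ 0 :=
  ((Fintype.equivFin {v // w v ≠ 0}).symm a).2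

lemma inclusion_equivFin {v : Fin D.n} (hv : w v ≠ 0) :
    D.inclusion w (Fintype.equivFin {v // w v ≠ 0} ⟨v, hv⟩) = v :=
  congrArg Subtype.val ((Fintype.equivFin {v // w v ≠ 0}).symm_apply_apply ⟨v, hv⟩)

lemma exists_inclusion_eq {v : Fin D.n} (hv : w v ≠ 0) : ∃ a, D.inclusion w a = v :=
  ⟨_, inclusion_equivFin hv⟩

lemma sum_inclusion {M : Type*} [AddCommMonoid M] {f : Fin D.n → M}
    (hf : ∀ v, w v = 0 → f v = 0) : ∑ a, f (D.inclusion w a) = ∑ v, f v := by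
  refine Fintype.sum_of_injective _ (D.inclusion w).injective _ _ (fun v hv => hf v ?_)
    fun _ => rfl
  by_contra h
  exact hv (exists_inclusion_eq h)

lemma IsSubweighting.hasClosedSupport (hw : D.IsSubweighting w) (hD : D.IsMED) :
    D.HasClosedSupport w := fun _ _ huv hv =>
  Nat.ne_zero_of_lt ((Nat.pos_of_ne_zero hv).trans_le (hw.le_of_imPred hD huv))

namespace HasClosedSupport

lemma ne_zero_of_pred (hw : D.HasClosedSupport w) {u v : Fin D.n} (huv : D.Pred u v)
    (hv : w v ≠ 0) : w u ≠ 0 := by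
  induction huv using Relation.ReflTransGen.head_induction_on with
  | refl => exact hv
  | head hux _ ih => exact hw hux ih

lemma map_inclusion_parent (hw : D.HasClosedSupport w) (a : Fin (D.restrict w).n) :
    ((D.restrict w).parent a).map (D.inclusion w) = D.parent (D.inclusion w a) := by
  rcases hp : D.parent (D.inclusion w a) with _ | u
  · have hparent : (D.restrict w).parent a = none := congrArg (Option.bind · _) hp
    rw [hparent, Option.map_none]
  · have hu : w u ≠ 0 := hw hp (inclusion_ne_zero a)
    have hparent : (D.restrict w).parent a = some (Fintype.equivFin {v // w v ≠ 0} ⟨u, hu⟩) :=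
      (congrArg (Option.bind · _) hp).trans (dif_pos hu)
    rw [hparent]
    exact congrArg some (inclusion_equivFin hu)

lemma imPred_iff (hw : D.HasClosedSupport w) {a b : Fin (D.restrict w).n} :
    (D.restrict w).ImPred a b ↔ D.ImPred (D.inclusion w a) (D.inclusion w b) := by
  rw [ImPred, ImPred, ← hw.map_inclusion_parent, ← Option.map_some,
    (Option.map_injective (D.inclusion w).injective).eq_iff]

lemma isRoot_iff (hw : D.HasClosedSupport w) {a : Fin (D.restrict w).n} :
    (D.restrict w).IsRoot a ↔ D.IsRoot (D.inclusion w a) := by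
  rw [IsRoot, IsRoot, ← hw.map_inclusion_parent, Option.map_eq_none_iff]

lemma properPred_iff (hw : D.HasClosedSupport w) {a b : Fin (D.restrict w).n} :
    (D.restrict w).ProperPred a b ↔ D.ProperPred (D.inclusion w a) (D.inclusion w b) := by
  refine ⟨fun h => Relation.TransGen.lift (D.inclusion w) (fun _ _ => hw.imPred_iff.1) _ _ h,
    fun h => ?_⟩
  generalize hu : D.inclusion w a = u at h
  induction h using Relation.TransGen.head_induction_on generalizing a with
  | single hub => exact .single (hw.imPred_iff.2 (hu ▸ hub))
  | head huc hcb ih =>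
    obtain ⟨c, rfl⟩ := exists_inclusion_eq
      (hw.ne_zero_of_pred hcb.to_reflTransGen (inclusion_ne_zero b))
    exact .head (hw.imPred_iff.2 (hu ▸ huc)) (ih rfl)

lemma pred_iff (hw : D.HasClosedSupport w) {a b : Fin (D.restrict w).n} :
    (D.restrict w).Pred a b ↔ D.Pred (D.inclusion w a) (D.inclusion w b) := by
  simp only [Pred, Relation.reflTransGen_iff_eq_or_transGen]
  exact or_congr (D.inclusion w).injective.eq_iff.symm hw.properPred_iff

lemma remotePred_iff (hw : D.HasClosedSupport w) {a b : Fin (D.restrict w).n} :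
    (D.restrict w).RemotePred a b ↔ D.RemotePred (D.inclusion w a) (D.inclusion w b) :=
  and_congr hw.properPred_iff (not_congr hw.imPred_iff)

lemma remoteProx_iff (hw : D.HasClosedSupport w) {a b : Fin (D.restrict w).n} :
    (D.restrict w).RemoteProx a b ↔ D.RemoteProx (D.inclusion w a) (D.inclusion w b) :=
  and_congr Iff.rfl hw.remotePred_iff

lemma isSatellite_iff (hw : D.HasClosedSupport w) {a : Fin (D.restrict w).n} :
    (D.restrict w).IsSatellite a ↔ D.IsSatellite (D.inclusion w a) := by
  refine ⟨fun ⟨t, ht⟩ => ⟨_, hw.remoteProx_iff.1 ht⟩, fun ⟨t, ht⟩ => ?_⟩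
  obtain ⟨c, rfl⟩ := exists_inclusion_eq
    (hw.ne_zero_of_pred ht.2.1.to_reflTransGen (inclusion_ne_zero a))
  exact ⟨c, hw.remoteProx_iff.2 ht⟩

lemma cod_restrict (hw : D.HasClosedSupport w) : (D.restrict w).cod = D.weightCod w := by
  have hcodAt (a m) : (D.restrict w).codAt a m = D.codAt (D.inclusion w a) m := by
    simp only [codAt, IsFree, hw.isSatellite_iff, hw.isRoot_iff]
    congr
  rw [cod_eq_weightCod fun a => Nat.one_le_iff_ne_zero.2 (inclusion_ne_zero a)]
  simp only [weightCod, hcodAt]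
  exact sum_inclusion (f := fun v => D.codAt v (w v)) fun v hv => by simp [hv]

end HasClosedSupport

lemma degD_restrict : (D.restrict w).degD = weightDeg w :=
  sum_inclusion (f := fun v => (w v + 1).choose 2) fun v hv => by simp [hv]

namespace IsSubweighting

lemma restrict_prox_ineq (hw : D.IsSubweighting w) (a : Fin (D.restrict w).n) :
    ∑ b with (D.restrict w).prox b a, (D.restrict w).wt b ≤ (D.restrict w).wt a := by
  refine le_of_eq_of_le ?_ (hw.prox_ineq (D.inclusion w a))
  rw [sum_filter, sum_filter]
  exact sum_inclusion (f := fun v => if D.prox v (D.inclusion w a) then w v else 0)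
    fun v hv => by simp [hv]

lemma restrict_succ_card (hw : D.IsSubweighting w) (hD : D.IsMED) (a : Fin (D.restrict w).n) :
    #{b | (D.restrict w).ImPred a b} ≤ (D.restrict w).wt a := by
  have hsucc : univ.filter ((D.restrict w).ImPred a)
      ⊆ univ.filter fun b => (D.restrict w).prox b a :=
    monotone_filter_right _ fun b _ hb =>
      hD.prox_parent _ _ ((hw.hasClosedSupport hD).imPred_iff.1 hb)
  rw [card_eq_sum_ones]
  calc ∑ b with (D.restrict w).ImPred a b, 1
      ≤ ∑ b with (D.restrict w).ImPred a b, (D.restrict w).wt b :=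
        sum_le_sum fun b _ => Nat.one_le_iff_ne_zero.2 (inclusion_ne_zero b)
    _ ≤ ∑ b with (D.restrict w).prox b a, (D.restrict w).wt b := sum_le_sum_of_subset hsucc
    _ ≤ (D.restrict w).wt a := hw.restrict_prox_ineq a

lemma isMED_restrict (hw : D.IsSubweighting w) (hD : D.IsMED) : (D.restrict w).IsMED :=
  have hc := hw.hasClosedSupport hD
  have hne {a b} (h : a ≠ b) : D.inclusion w a ≠ D.inclusion w b := (D.inclusion w).injective.ne h
  { forest := fun _ h => hD.forest _ (hc.properPred_iff.1 h)
    wt_pos := fun a => Nat.one_le_iff_ne_zero.2 (inclusion_ne_zero a)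
    root_not_prox := fun _ ha _ => hD.root_not_prox _ (hc.isRoot_iff.1 ha) _
    prox_parent := fun _ _ h => hD.prox_parent _ _ (hc.imPred_iff.1 h)
    prox_remote := fun _ _ _ hp h hne' =>
      hc.remotePred_iff.2 (hD.prox_remote _ _ _ (hc.imPred_iff.1 hp) h (hne hne'))
    prox_unique := fun _ _ _ _ hp h h' hu hu' => (D.inclusion w).injective
      (hD.prox_unique _ _ _ _ (hc.imPred_iff.1 hp) h h' (hne hu) (hne hu'))
    prox_between := fun _ _ _ h hbc hca =>
      hD.prox_between _ _ _ h (hc.properPred_iff.1 hbc) (hc.properPred_iff.1 hca)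
    prox_ineq := hw.restrict_prox_ineq
    succ_card := hw.restrict_succ_card hD
    succ_sat := fun _ _ _ _ h₁ h₂ h₃ s₁ s₂ s₃ n₁₂ n₁₃ n₂₃ =>
      hD.succ_sat _ _ _ _ (hc.imPred_iff.1 h₁) (hc.imPred_iff.1 h₂) (hc.imPred_iff.1 h₃)
        (hc.isSatellite_iff.1 s₁) (hc.isSatellite_iff.1 s₂) (hc.isSatellite_iff.1 s₃)
        (hne n₁₂) (hne n₁₃) (hne n₂₃)
    succ_sat_diff := fun _ _ _ _ h₁ h₂ n₁₂ t₁ t₂ =>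
      hD.succ_sat_diff _ _ _ _ (hc.imPred_iff.1 h₁) (hc.imPred_iff.1 h₂) (hne n₁₂)
        (hc.remoteProx_iff.1 t₁) (hc.remoteProx_iff.1 t₂)
    minimal := fun a hleaf ha => by
      refine hc.isSatellite_iff.2 (hw.minimal _ (fun x hx => ?_) ha)
      by_contra hx0
      obtain ⟨b, rfl⟩ := exists_inclusion_eq hx0
      exact hleaf b (hc.imPred_iff.2 hx) }

lemma isSubdiagram_restrict (hw : D.IsSubweighting w) (hD : D.IsMED) :
    IsSubdiagram (D.restrict w) D :=
  ⟨{ toFun := D.inclusion w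
     inj := (D.inclusion w).injective
     wt_le := fun _ => hw.le _
     pred_iff := fun _ _ => (hw.hasClosedSupport hD).pred_iff
     prox_iff := fun _ _ => Iff.rfl }⟩

end IsSubweighting

end Restrict

end PreDiagram

open PreDiagram in
theorem statement14_general (r : ℕ) (D : PreDiagram) (hD : D.IsMED) (hcod : (r : ℤ) ≤ D.cod) :
    ∃ D' : PreDiagram, D'.IsMED ∧ IsSubdiagram D' D ∧
      (r : ℤ) ≤ D'.cod ∧ D'.degD ≤ 3 * r := by
  obtain ⟨w, hw, hwcod, hwdeg⟩ := hD.exists_isSubweighting_weightDeg_le hcod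
  refine ⟨D.restrict w, hw.isMED_restrict hD, hw.isSubdiagram_restrict hD, ?_, ?_⟩
  · rwa [(hw.hasClosedSupport hD).cod_restrict]
  · rwa [degD_restrict]

open PreDiagram in
/-- Lemma (4.4): for `1 ≤ r ≤ 8`, a minimal Enriques diagram with `cod(D) ≥ r + 1`
contains a minimal Enriques subdiagram `D'` with `cod(D') ≥ r` and `deg(D') ≤ 3r`. -/
theorem statement14 (r : ℕ) (hr1 : 1 ≤ r) (hr8 : r ≤ 8)
    (D : PreDiagram) (hD : D.IsMED) (hcod : (r : ℤ) + 1 ≤ D.cod) :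
    ∃ D' : PreDiagram, D'.IsMED ∧ IsSubdiagram D' D ∧
      (r : ℤ) ≤ D'.cod ∧ D'.degD ≤ 3 * r := statement14_general r D hD (by linarith)
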